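/- arXiv:2509.11221 — 2 statements merged into one kernel-verified Lean document; each statement's English description precedes it below -/
import Mathlib

section
/- Let ι and κ be nonempty finite types and let ρ and σ be positive definite density matrices on ℂ indexed by (ι × κ) × (ι × κ). Define, for a complex ι × ι matrix X, V(X) := ((X · Tr_b(ρ)^{-1/2}) ⊗ I_κ) · ρ^{1/2} (Kronecker product, I_κ the identity κ × κ matrix). Then for every complex ι × ι matrix X, Re Tr(ρ^{-1} · V(X)† · σ · V(X)) ≤ Re Tr(Tr_b(ρ)^{-1} · X† · Tr_b(σ) · X). (This expresses the superoperator inequality V_ρ† Δ_{ρ,σ} V_ρ ≤ Δ^a_{ρ,σ} between the relative modular operators on the full and the reduced system.) -/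
/-! The claimed inequality is in fact an equality. Write `S = (Tr_b ρ)^{-1/2}` and `Y = X S`, so that
`V(X) = (Y ⊗ I) ρ^{1/2}`. By cyclicity of the trace and `ρ^{1/2} ρ⁻¹ ρ^{1/2} = 1`, the left-hand side
is `Tr((Y ⊗ I)† σ (Y ⊗ I)) = Tr(Y† Tr_b(σ) Y)` (the partial trace is a bimodule map over `A ⊗ I`
and preserves the trace), and by cyclicity again this is `Tr(S² X† Tr_b(σ) X)`,
where `S² = (Tr_b ρ)⁻¹`. Positive definiteness of `ρ`, and hence of `Tr_b ρ`, makes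
the powers invertible and multiplicative in the exponent. -/

open Matrix ComplexOrder Kronecker

/-- The partial trace over the second tensor factor: `trB A i j = ∑ k, A (i,k) (j,k)`. -/
noncomputable def trB {ι κ : Type*} [Fintype κ] (A : Matrix (ι × κ) (ι × κ) ℂ) :
    Matrix ι ι ℂ :=
  Matrix.of fun i j => ∑ k : κ, A (i, k) (j, k)

/-- Real power of a matrix, applied via the continuous functional calculus (spectrally). -/
noncomputable def mpow {ι : Type*} [Fintype ι] [DecidableEq ι]
    (M : Matrix ι ι ℂ) (s : ℝ) : Matrix ι ι ℂ :=
  cfc (fun x : ℝ => Real.rpow x s) M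

/-- Logarithm of a matrix, applied via the continuous functional calculus (spectrally),
with the convention `Real.log 0 = 0`. -/
noncomputable def mlog {ι : Type*} [Fintype ι] [DecidableEq ι]
    (M : Matrix ι ι ℂ) : Matrix ι ι ℂ :=
  cfc Real.log M

/-- The Petz operator `V_ρ` associated to a state `ρ` on a composite system:
`V_ρ(X) = ((X · Tr_b(ρ)^{-1/2}) ⊗ I) · ρ^{1/2}`. -/
noncomputable def petzV {ι κ : Type*} [Fintype ι] [DecidableEq ι] [Fintype κ] [DecidableEq κ]
    (ρ : Matrix (ι × κ) (ι × κ) ℂ) (X : Matrix ι ι ℂ) : Matrix (ι × κ) (ι × κ) ℂ :=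
  ((X * mpow (trB ρ) (-(1/2 : ℝ))) ⊗ₖ (1 : Matrix κ κ ℂ)) * mpow ρ (1/2 : ℝ)

/-- The partial trace is the sum of the diagonal `ι × ι` blocks, each a principal submatrix
and hence positive definite. -/
lemma trB_posDef {ι κ : Type*} [Fintype ι] [Fintype κ] [Nonempty κ]
    {A : Matrix (ι × κ) (ι × κ) ℂ} (hA : A.PosDef) : (trB A).PosDef := by
  have h : trB A = ∑ k : κ, A.submatrix (fun i => (i, k)) (fun i => (i, k)) := by
    ext i j
    simp [trB, Matrix.sum_apply]
  rw [h]
  refine Matrix.posDef_sum Finset.univ_nonempty fun k _ => ?_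
  exact hA.submatrix fun a b hab => by simpa using hab

lemma mpow_conjTranspose {n : Type*} [Fintype n] [DecidableEq n] (M : Matrix n n ℂ) (s : ℝ) :
    (mpow M s)ᴴ = mpow M s :=
  (cfc_predicate (R := ℝ) (p := IsSelfAdjoint) (fun x : ℝ => Real.rpow x s) M)

lemma spectrum_pos {n : Type*} [Fintype n] [DecidableEq n] {M : Matrix n n ℂ} (hM : M.PosDef)
    {x : ℝ} (hx : x ∈ spectrum ℝ M) : 0 < x := by
  rw [hM.isHermitian.spectrum_real_eq_range_eigenvalues] at hx
  obtain ⟨i, rfl⟩ := hx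
  exact hM.eigenvalues_pos i

lemma continuousOn_rpow_spectrum {n : Type*} [Fintype n] [DecidableEq n] {M : Matrix n n ℂ}
    (hM : M.PosDef) (s : ℝ) : ContinuousOn (fun x : ℝ => Real.rpow x s) (spectrum ℝ M) :=
  fun x hx => (Real.continuousAt_rpow_const x s
    (Or.inl (spectrum_pos hM hx).ne')).continuousWithinAt

lemma mpow_mul_mpow {n : Type*} [Fintype n] [DecidableEq n] {M : Matrix n n ℂ} (hM : M.PosDef)
    (s t : ℝ) : mpow M s * mpow M t = mpow M (s + t) := by
  unfold mpow
  rw [← cfc_mul _ _ M (continuousOn_rpow_spectrum hM s) (continuousOn_rpow_spectrum hM t)]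
  exact cfc_congr fun x hx => (Real.rpow_add (spectrum_pos hM hx) s t).symm

lemma mpow_one {n : Type*} [Fintype n] [DecidableEq n] {M : Matrix n n ℂ} (hM : M.PosDef) :
    mpow M 1 = M := by
  have h : (fun x : ℝ => Real.rpow x 1) = id := funext Real.rpow_one
  rw [mpow, h]
  exact cfc_id ℝ M hM.isHermitian.isSelfAdjoint

lemma mpow_zero {n : Type*} [Fintype n] [DecidableEq n] {M : Matrix n n ℂ} (hM : M.PosDef) :
    mpow M 0 = 1 := by
  have h : (fun x : ℝ => Real.rpow x 0) = 1 := funext Real.rpow_zero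
  rw [mpow, h]
  exact cfc_one ℝ M hM.isHermitian.isSelfAdjoint

lemma mpow_neg_one {n : Type*} [Fintype n] [DecidableEq n] {M : Matrix n n ℂ} (hM : M.PosDef) :
    mpow M (-1) = M⁻¹ := by
  refine (Matrix.inv_eq_left_inv ?_).symm
  nth_rewrite 2 [← mpow_one hM]
  rw [mpow_mul_mpow hM, neg_add_cancel, mpow_zero hM]

/-- The partial trace is the Hilbert–Schmidt adjoint of `Z ↦ Z ⊗ I`. -/
lemma trace_mul_kronecker_one {ι κ : Type*} [Fintype ι] [Fintype κ] [DecidableEq κ]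
    (A : Matrix (ι × κ) (ι × κ) ℂ) (Z : Matrix ι ι ℂ) :
    (A * (Z ⊗ₖ (1 : Matrix κ κ ℂ))).trace = (trB A * Z).trace := by
  simp only [Matrix.trace, Matrix.diag, Matrix.mul_apply, trB, Matrix.kroneckerMap_apply,
    Fintype.sum_prod_type, Matrix.one_apply, Matrix.of_apply, mul_ite, mul_one, mul_zero,
    Finset.sum_ite_eq', Finset.mem_univ, if_true, Finset.sum_mul]
  exact Finset.sum_congr rfl fun i _ => Finset.sum_comm

/-- **The modular-operator inequality `V_ρ† Δ_{ρ,σ} V_ρ ≤ Δ^a_{ρ,σ}`.** For positive definite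
density matrices `ρ`, `σ` on the composite system and every matrix `X` on the subsystem,
`Re Tr(ρ⁻¹ · V_ρ(X)† · σ · V_ρ(X)) ≤ Re Tr(Tr_b(ρ)⁻¹ · X† · Tr_b(σ) · X)`. -/
theorem petz_modular_operator_inequality {ι κ : Type*}
    [Fintype ι] [DecidableEq ι] [Nonempty ι] [Fintype κ] [DecidableEq κ] [Nonempty κ]
    (ρ σ : Matrix (ι × κ) (ι × κ) ℂ) (hρ : ρ.PosDef) (hρtr : ρ.trace = 1)
    (hσ : σ.PosDef) (hσtr : σ.trace = 1) (X : Matrix ι ι ℂ) :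
    (ρ⁻¹ * (petzV ρ X)ᴴ * σ * petzV ρ X).trace.re ≤
      ((trB ρ)⁻¹ * Xᴴ * trB σ * X).trace.re := by
  have hτ := trB_posDef hρ
  have hP : mpow ρ (1/2) * (ρ⁻¹ * mpow ρ (1/2)) = 1 := by
    rw [← mpow_neg_one hρ, mpow_mul_mpow hρ, mpow_mul_mpow hρ, ← mpow_zero hρ]
    norm_num
  have hS : mpow (trB ρ) (-(1/2)) * mpow (trB ρ) (-(1/2)) = (trB ρ)⁻¹ := by
    rw [mpow_mul_mpow hτ, ← mpow_neg_one hτ]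
    norm_num
  have hVadj : (petzV ρ X)ᴴ = mpow ρ (1/2) *
      ((mpow (trB ρ) (-(1/2)) * Xᴴ) ⊗ₖ (1 : Matrix κ κ ℂ)) := by
    simp only [petzV, Matrix.conjTranspose_mul, Matrix.conjTranspose_kronecker,
      mpow_conjTranspose, Matrix.conjTranspose_one]
  refine le_of_eq (congrArg Complex.re ?_)
  rw [hVadj, petzV]
  set P := mpow ρ (1/2)
  set S := mpow (trB ρ) (-(1/2))
  calc (ρ⁻¹ * (P * ((S * Xᴴ) ⊗ₖ (1 : Matrix κ κ ℂ))) * σ *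
        (((X * S) ⊗ₖ (1 : Matrix κ κ ℂ)) * P)).trace
      = ((P * (ρ⁻¹ * P)) * (((S * Xᴴ) ⊗ₖ (1 : Matrix κ κ ℂ)) * σ *
          ((X * S) ⊗ₖ (1 : Matrix κ κ ℂ)))).trace := by
        rw [Matrix.mul_assoc P, Matrix.trace_mul_comm P]
        simp only [Matrix.mul_assoc]
    _ = (σ * ((X * S * (S * Xᴴ)) ⊗ₖ (1 : Matrix κ κ ℂ))).trace := by
        rw [hP, Matrix.one_mul, Matrix.mul_assoc, Matrix.trace_mul_comm, Matrix.mul_assoc,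
          ← Matrix.mul_kronecker_mul, Matrix.one_mul]
    _ = (trB σ * (X * ((trB ρ)⁻¹ * Xᴴ))).trace := by
        rw [trace_mul_kronecker_one, ← hS]
        simp only [Matrix.mul_assoc]
    _ = ((trB ρ)⁻¹ * Xᴴ * trB σ * X).trace := by
        rw [← Matrix.mul_assoc (trB σ), Matrix.trace_mul_comm, Matrix.mul_assoc _ (trB σ)]
end

section
/- Let ρ and σ be density matrices on ℂ indexed by a nonempty finite type ι, and suppose the range of ρ is NOT contained in the range of σ. Then Re Tr((ρ + εI)·log(ρ + εI) − (ρ + εI)·log(σ + εI)) tends to +∞ as ε → 0⁺. (The regularized relative entropy diverges exactly when the support condition fails, matching the support-based definition S(ρ‖σ) = +∞.) -/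
/-!
Diagonalise the second argument: if `A = U diag(a) U*`, then
`Re Tr((M + ε) log(A + ε)) = ∑ i, log(aᵢ + ε) (mᵢ + ε)` with `mᵢ = Re (U* M U)ᵢᵢ`
(`trace_add_mul_mlog_re`). For `M = A = ρ` this is `∑ i, (λᵢ + ε) log(λᵢ + ε)`, which is bounded
below since `x log x ≥ x - 1`. For `M = ρ`, `A = σ` every summand of `-∑ log(sᵢ + ε) (mᵢ + ε)`
with `sᵢ > 0` converges and every summand with `sᵢ = 0` is nonnegative for small `ε`; such a
summand diverges to `+∞` as soon as `mᵢ > 0`. If `mᵢ` vanished whenever `sᵢ = 0`, positivity of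
`U* ρ U` would kill its whole `i`-th row, and the range of `ρ` would lie in the range of `σ`
(`exists_eigenvalue_zero_of_not_range_le`).
-/

open Matrix ComplexOrder Filter

section

variable {ι : Type*} [Fintype ι] [DecidableEq ι]

/-- The matrix of `M` in the eigenbasis of the Hermitian matrix `A`. -/
noncomputable def inEigenbasis {A : Matrix ι ι ℂ} (hA : A.IsHermitian) (M : Matrix ι ι ℂ) :
    Matrix ι ι ℂ :=
  (star hA.eigenvectorUnitary : Matrix ι ι ℂ) * M * (hA.eigenvectorUnitary : Matrix ι ι ℂ)

lemma inEigenbasis_self {A : Matrix ι ι ℂ} (hA : A.IsHermitian) :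
    inEigenbasis hA A = diagonal (fun i => (hA.eigenvalues i : ℂ)) := by
  have h := hA.conjStarAlgAut_star_eigenvectorUnitary
  rw [Unitary.conjStarAlgAut_star_apply] at h
  exact h

lemma inEigenbasis_add_smul_one {A : Matrix ι ι ℂ} (hA : A.IsHermitian) (M : Matrix ι ι ℂ)
    (ε : ℝ) : inEigenbasis hA (M + ε • 1) = inEigenbasis hA M + ε • 1 := by
  simp [inEigenbasis, mul_add, add_mul]

lemma inEigenbasis_posSemidef {A : Matrix ι ι ℂ} (hA : A.IsHermitian) {M : Matrix ι ι ℂ}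
    (hM : M.PosSemidef) : (inEigenbasis hA M).PosSemidef :=
  hM.conjTranspose_mul_mul_same _

/-- Translation by `ε` acts on the spectrum, so `log (A + ε)` is the functional calculus of `A`
itself. Continuity is automatic because the spectrum is finite; in particular the junk value of
`Real.log` at `0` causes no trouble. -/
lemma mlog_add_smul_one {A : Matrix ι ι ℂ} (hA : A.IsHermitian) (ε : ℝ) :
    mlog (A + ε • 1) = cfc (fun x => Real.log (x + ε)) A := by
  have hs : IsSelfAdjoint A := hA
  have hfin : (spectrum ℝ A).Finite := Matrix.finite_real_spectrum
  have h1 : A + ε • 1 = cfc (fun x : ℝ => x + ε) A := by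
    rw [cfc_add_const ε (fun x : ℝ => x) A, cfc_id' ℝ A, Algebra.algebraMap_eq_smul_one]
  rw [mlog, h1, ← cfc_comp' Real.log (fun x : ℝ => x + ε) A
    ((hfin.image _).continuousOn _)]

lemma trace_mul_cfc {A : Matrix ι ι ℂ} (hA : A.IsHermitian) (M : Matrix ι ι ℂ) (f : ℝ → ℝ) :
    (M * cfc f A).trace = ∑ i, inEigenbasis hA M i i * (f (hA.eigenvalues i) : ℂ) := by
  rw [hA.cfc_eq, IsHermitian.cfc, Unitary.conjStarAlgAut_apply, ← mul_assoc, trace_mul_comm,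
    ← mul_assoc, ← mul_assoc]
  change (inEigenbasis hA M * _).trace = _
  simp [trace, mul_diagonal]

lemma trace_add_mul_mlog_re {A : Matrix ι ι ℂ} (hA : A.IsHermitian) (M : Matrix ι ι ℂ) (ε : ℝ) :
    ((M + ε • 1) * mlog (A + ε • 1)).trace.re =
      ∑ i, ((inEigenbasis hA M i i).re + ε) * Real.log (hA.eigenvalues i + ε) := by
  rw [mlog_add_smul_one hA, trace_mul_cfc hA, inEigenbasis_add_smul_one, Complex.re_sum]
  simp [Complex.mul_re]

/-- If `range ρ` is not contained in `range σ`, some kernel vector of `σ` in its eigenbasis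
carries positive `ρ`-weight. -/
lemma exists_eigenvalue_zero_of_not_range_le {ρ σ : Matrix ι ι ℂ} (hρ : ρ.PosSemidef)
    (hσ : σ.IsHermitian)
    (h : ¬ LinearMap.range ρ.mulVecLin ≤ LinearMap.range σ.mulVecLin) :
    ∃ j, hσ.eigenvalues j = 0 ∧ 0 < (inEigenbasis hσ ρ j j).re := by
  by_contra! hcon
  apply h
  have hB := inEigenbasis_posSemidef hσ hρ
  -- A vanishing diagonal entry of a positive semidefinite matrix forces its row to vanish.
  have hrow : ∀ j, hσ.eigenvalues j = 0 → ∀ k, inEigenbasis hσ ρ j k = 0 := by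
    intro j hj k
    have hnn : 0 ≤ inEigenbasis hσ ρ j j := hB.diag_nonneg
    have hz : inEigenbasis hσ ρ j j = 0 := by
      rw [Complex.le_def] at hnn
      exact Complex.ext (le_antisymm (hcon j hj) hnn.1) hnn.2.symm
    have hcol := (hB.dotProduct_mulVec_zero_iff (Pi.single j 1)).1 (by simp [hz])
    have hkj : inEigenbasis hσ ρ k j = 0 := by simpa using congrFun hcol k
    rw [← hB.isHermitian.apply, hkj, star_zero]
  set U : Matrix ι ι ℂ := (hσ.eigenvectorUnitary : Matrix ι ι ℂ) with hU
  have hUU : U * star U = 1 := Unitary.coe_mul_star_self hσ.eigenvectorUnitary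
  have hfac : inEigenbasis hσ σ * diagonal (fun i => (hσ.eigenvalues i : ℂ)⁻¹)
      * inEigenbasis hσ ρ = inEigenbasis hσ ρ := by
    rw [inEigenbasis_self, diagonal_mul_diagonal]
    ext i k
    rw [diagonal_mul]
    by_cases hi : hσ.eigenvalues i = 0
    · simp [hrow i hi k]
    · rw [mul_inv_cancel₀ (by exact_mod_cast hi), one_mul]
  have hcancel : ∀ M, U * inEigenbasis hσ M * star U = M := by
    intro M
    change U * (star U * M * U) * star U = M
    calc _ = (U * star U) * M * (U * star U) := by simp only [mul_assoc]
      _ = M := by rw [hUU, one_mul, mul_one]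
  have hmul : ∀ M, U * inEigenbasis hσ M = M * U := by
    intro M
    change U * (star U * M * U) = _
    rw [← mul_assoc, ← mul_assoc, hUU, one_mul]
  -- Undoing the change of basis in `hfac` exhibits `ρ` as `σ` times a matrix.
  obtain ⟨X, hX⟩ : ∃ X, ρ = σ * X := by
    refine ⟨U * diagonal (fun i => (hσ.eigenvalues i : ℂ)⁻¹) * inEigenbasis hσ ρ * star U, ?_⟩
    conv_lhs => rw [← hcancel ρ, ← hfac]
    simp only [← mul_assoc, hmul]
  rw [hX, mulVecLin_mul]
  exact LinearMap.range_comp_le_range _ _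

end

/-- **The regularized relative entropy diverges when the support condition fails.** If `ρ`, `σ`
are density matrices with `range ρ ⊄ range σ`, then
`Re Tr((ρ+εI)·log(ρ+εI) − (ρ+εI)·log(σ+εI)) → +∞` as `ε → 0⁺`. -/
theorem regularized_relEntropy_tendsto_atTop {ι : Type*} [Fintype ι] [DecidableEq ι] [Nonempty ι]
    (ρ σ : Matrix ι ι ℂ) (hρ : ρ.PosSemidef) (hρtr : ρ.trace = 1)
    (hσ : σ.PosSemidef) (hσtr : σ.trace = 1)
    (hsupp : ¬ LinearMap.range ρ.mulVecLin ≤ LinearMap.range σ.mulVecLin) :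
    Tendsto (fun ε : ℝ =>
        ((ρ + ε • 1) * mlog (ρ + ε • 1) - (ρ + ε • 1) * mlog (σ + ε • 1)).trace.re)
      (nhdsWithin 0 (Set.Ioi 0)) atTop := by
  have hρH := hρ.isHermitian
  have hσH := hσ.isHermitian
  obtain ⟨j, hj0, hjpos⟩ := exists_eigenvalue_zero_of_not_range_le hρ hσH hsupp
  set s := hσH.eigenvalues with hs
  set m : ι → ℝ := fun i => (inEigenbasis hσH ρ i i).re with hm
  have hm0 : ∀ i, 0 ≤ m i := fun i =>
    (Complex.le_def.1 (inEigenbasis_posSemidef hσH hρ).diag_nonneg).1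
  have hlog : Tendsto (fun ε : ℝ => -Real.log ε) (nhdsWithin 0 (Set.Ioi 0)) atTop :=
    tendsto_neg_atBot_atTop.comp Real.tendsto_log_nhdsGT_zero
  have hw : ∀ i, Tendsto (fun ε : ℝ => m i + ε) (nhdsWithin 0 (Set.Ioi 0)) (nhds (m i)) := by
    intro i
    have : Tendsto (fun ε : ℝ => m i + ε) (nhds 0) (nhds (m i + 0)) :=
      (continuous_const.add continuous_id).tendsto 0
    rw [add_zero] at this
    exact this.mono_left nhdsWithin_le_nhds
  have hpos : ∀ᶠ ε : ℝ in nhdsWithin 0 (Set.Ioi 0), 0 < ε := self_mem_nhdsWithin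
  have hlt : ∀ᶠ ε : ℝ in nhdsWithin 0 (Set.Ioi 0), ε < 1 :=
    nhdsWithin_le_nhds (Iio_mem_nhds one_pos)
  have hterm : ∀ i, ∃ C : ℝ, ∀ᶠ ε : ℝ in nhdsWithin 0 (Set.Ioi 0),
      C ≤ (m i + ε) * -Real.log (s i + ε) := by
    intro i
    rcases eq_or_ne (s i) 0 with hi | hi
    · refine ⟨0, ?_⟩
      filter_upwards [hpos, hlt] with ε h0 h1
      rw [hi, zero_add]
      exact mul_nonneg (add_nonneg (hm0 i) h0.le) (neg_nonneg.2 (Real.log_nonpos h0.le h1.le))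
    · have hl : Tendsto (fun ε : ℝ => -Real.log (s i + ε)) (nhdsWithin 0 (Set.Ioi 0))
          (nhds (-Real.log (s i))) := by
        have : ContinuousAt (fun ε : ℝ => -Real.log (s i + ε)) 0 :=
          (ContinuousAt.log (by fun_prop) (by simpa using hi)).neg
        have h2 := this.tendsto
        rw [add_zero] at h2
        exact h2.mono_left nhdsWithin_le_nhds
      exact ⟨_, ((hw i).mul hl).eventually_const_le (sub_one_lt _)⟩
  choose C hC using hterm
  have hdiv : Tendsto (fun ε : ℝ => (m j + ε) * -Real.log (s j + ε))
      (nhdsWithin 0 (Set.Ioi 0)) atTop := by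
    simp only [hj0, zero_add]
    exact (hw j).pos_mul_atTop hjpos hlog
  have hbound : Tendsto (fun ε : ℝ => (m j + ε) * -Real.log (s j + ε) +
      (∑ i ∈ Finset.univ.erase j, C i - Fintype.card ι))
      (nhdsWithin 0 (Set.Ioi 0)) atTop := tendsto_atTop_add_const_right _ _ hdiv
  refine tendsto_atTop_mono' _ ?_ hbound
  filter_upwards [hpos, eventually_all.2 hC] with ε h0 hCε
  have hent : -(Fintype.card ι : ℝ) ≤ ((ρ + ε • 1) * mlog (ρ + ε • 1)).trace.re := by
    rw [trace_add_mul_mlog_re hρH, inEigenbasis_self]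
    have : ∑ _i : ι, (-1 : ℝ) = -(Fintype.card ι : ℝ) := by simp
    rw [← this]
    refine Finset.sum_le_sum fun i _ => ?_
    have hx : 0 < hρH.eigenvalues i + ε := add_pos_of_nonneg_of_pos (hρ.eigenvalues_nonneg i) h0
    -- `x log x ≥ x - 1 ≥ -1`, from `log x ≥ 1 - x⁻¹`.
    have h1 := mul_le_mul_of_nonneg_left (Real.one_sub_inv_le_log_of_pos hx) hx.le
    rw [mul_sub, mul_inv_cancel₀ hx.ne', mul_one] at h1
    simp only [diagonal_apply_eq, Complex.ofReal_re]
    linarith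
  have hcross : ((ρ + ε • 1) * mlog (σ + ε • 1)).trace.re =
      -∑ i, (m i + ε) * -Real.log (s i + ε) := by
    rw [trace_add_mul_mlog_re hσH, ← Finset.sum_neg_distrib]
    exact Finset.sum_congr rfl fun i _ => by ring
  have hrest : ∑ i ∈ Finset.univ.erase j, C i ≤
      ∑ i ∈ Finset.univ.erase j, (m i + ε) * -Real.log (s i + ε) :=
    Finset.sum_le_sum fun i _ => hCε i
  rw [trace_sub, Complex.sub_re, hcross, ← Finset.add_sum_erase _ _ (Finset.mem_univ j)]
  linarith
end
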